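/- arXiv:1706.00451 — 2 statements merged into one kernel-verified Lean document; each statement's English description precedes it below -/
import Mathlib

section
/- Let f be a nonzero polynomial with complex coefficients which is not a monomial (not of the form c·X^n). Then Jensen's inequality is strict for f: exp(∫₀¹ log|f(e^{2πik})| dk) < ∫₀¹ |f(e^{2πik})| dk. -/
open Polynomial

noncomputable section

/-- `e k = exp(2πik)`. -/
def e (k : ℝ) : ℂ := Complex.exp (2 * Real.pi * Complex.I * k)

lemma e_injOn : Set.InjOn e (Set.Ioc (0:ℝ) 1) := by
  intro x hx y hy h
  unfold e at h
  rw [Complex.exp_eq_exp_iff_exists_int] at h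
  obtain ⟨n, hn⟩ := h
  have h2 : (2 * Real.pi * Complex.I : ℂ) ≠ 0 := Complex.two_pi_I_ne_zero
  have h3 : (x : ℂ) = y + n := by
    apply mul_left_cancel₀ h2
    rw [hn]; ring
  have h4 : x = y + n := by exact_mod_cast h3
  have h5 : (n : ℝ) < 1 := by linarith [hx.2, hy.1]
  have h6 : (-1 : ℝ) < n := by linarith [hx.1, hy.2]
  have h7 : n < 1 := by exact_mod_cast h5
  have h8 : -1 < n := by exact_mod_cast h6
  have h9 : n = 0 := by omega
  rw [h4, h9]; simp

lemma e_norm (k : ℝ) : ‖e k‖ = 1 := by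
  have : (2 * Real.pi * Complex.I * k : ℂ) = ((2 * Real.pi * k : ℝ) : ℂ) * Complex.I := by
    push_cast; ring
  rw [e, this, Complex.norm_exp_ofReal_mul_I]

lemma e_cont : Continuous e := by
  unfold e; fun_prop

lemma monomial_of_const (f : ℂ[X]) (A : ℝ) (hA : 0 < A)
    (h : Set.Infinite {z : ℂ | ‖z‖ = 1 ∧ ‖f.eval z‖ = A}) :
    ∃ (c : ℂ) (n : ℕ), f = C c * X ^ n := by
  set g := (f.map (starRingEnd ℂ)) with hg
  have key : f * g.reverse = C ((A:ℂ)^2) * X ^ g.natDegree := by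
    apply Polynomial.eq_of_infinite_eval_eq
    refine h.mono ?_
    rintro z ⟨hz, hfz⟩
    have hzz : z * (starRingEnd ℂ) z = 1 := by
      rw [Complex.mul_conj']; simp [hz]
    let _ : Invertible ((starRingEnd ℂ) z) := ⟨z, hzz, by rw [mul_comm]; exact hzz⟩
    have h1 := eval₂_reverse_mul_pow (RingHom.id ℂ) ((starRingEnd ℂ) z) g
    have h2 : ⅟((starRingEnd ℂ) z) = z := rfl
    rw [h2] at h1
    have h3 : eval₂ (RingHom.id ℂ) ((starRingEnd ℂ) z) g = (starRingEnd ℂ) (f.eval z) := by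
      rw [hg, eval₂_id, eval_map, eval₂_hom]
    rw [h3, eval₂_id] at h1
    have h4 : f.eval z * (starRingEnd ℂ) (f.eval z) = (A:ℂ)^2 := by
      rw [Complex.mul_conj', hfz]
    show eval z _ = eval z _
    simp only [eval_mul, eval_C, eval_pow, eval_X]
    rw [← h4, ← h1]
    have h5 : ((starRingEnd ℂ) z) ^ g.natDegree * z ^ g.natDegree = 1 := by
      rw [← mul_pow, mul_comm, hzz, one_pow]
    linear_combination (-(eval z f * eval z g.reverse)) * h5
  have hA2 : ((A:ℂ)^2) ≠ 0 := by
    have : (A:ℂ) ≠ 0 := by exact_mod_cast hA.ne'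
    exact pow_ne_zero _ this
  have hd : f ∣ X ^ g.natDegree := by
    refine ⟨C (((A:ℂ)^2)⁻¹) * g.reverse, ?_⟩
    have : f * (C (((A:ℂ)^2)⁻¹) * g.reverse) = C (((A:ℂ)^2)⁻¹) * (f * g.reverse) := by ring
    rw [this, key, ← mul_assoc, ← C_mul, inv_mul_cancel₀ hA2]; simp
  rw [dvd_prime_pow prime_X] at hd
  obtain ⟨i, -, hi⟩ := hd
  obtain ⟨u, hu⟩ := hi.symm
  obtain ⟨c, -, hc⟩ := Polynomial.isUnit_iff.1 u.isUnit
  exact ⟨c, i, by rw [hc, ← hu]; ring⟩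

lemma log_int (f : ℂ[X]) :
    IntervalIntegrable (fun k => Real.log ‖f.eval (e k)‖) MeasureTheory.volume 0 1 := by
  have h := (intervalIntegrable_mahlerMeasure f).comp_mul_left (c := 2 * Real.pi)
  rw [zero_div, div_self Real.two_pi_pos.ne'] at h
  convert h using 5 with k
  simp only [circleMap, e]
  push_cast
  simp only [Complex.ofReal_one, zero_add, one_mul]
  congr 1; ring

theorem ae_of_finite {P : ℝ → Prop} (h : Set.Finite {k | k ∈ Set.Ioc (0:ℝ) 1 ∧ P k}) :
    ∀ᵐ k ∂(MeasureTheory.volume.restrict (Set.Ioc (0:ℝ) 1)), ¬ P k := by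
  rw [MeasureTheory.ae_restrict_iff' measurableSet_Ioc]
  have := h.countable.ae_notMem MeasureTheory.volume
  filter_upwards [this] with k hk hk1 hk2
  exact hk ⟨hk1, hk2⟩

/-- For a nonzero complex polynomial `f` which is not a monomial, Jensen's
inequality comparing the Mahler measure with the `L¹`-norm on the unit circle is strict:
`exp(∫₀¹ log |f(e^{2πik})| dk) < ∫₀¹ |f(e^{2πik})| dk`. -/
theorem mahler_lt_L1_of_not_monomial
    (f : Polynomial ℂ) (hf : f ≠ 0)
    (hmono : ¬ ∃ (c : ℂ) (n : ℕ), f = Polynomial.C c * Polynomial.X ^ n) :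
    Real.exp (∫ k in (0:ℝ)..1, Real.log ‖f.eval (e k)‖) <
      ∫ k in (0:ℝ)..1, ‖f.eval (e k)‖ := by
  have hcont : Continuous (fun k => ‖f.eval (e k)‖) :=
    (f.continuous.comp e_cont).norm
  have hint := hcont.intervalIntegrable (μ := MeasureTheory.volume) 0 1
  have hne : MeasureTheory.volume.restrict (Set.Ioc (0:ℝ) 1) ≠ 0 := by
    simp [MeasureTheory.Measure.restrict_eq_zero]
  have hz : ∀ᵐ k ∂(MeasureTheory.volume.restrict (Set.Ioc (0:ℝ) 1)), ¬ (f.eval (e k) = 0) := by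
    apply ae_of_finite
    refine Set.Finite.of_finite_image (f := e) ?_ (e_injOn.mono fun k hk => hk.1)
    refine (f.rootSet_finite ℂ).subset ?_
    rintro _ ⟨k, hk, rfl⟩
    rw [mem_rootSet]
    exact ⟨hf, by simpa using hk.2⟩
  have key : ∀ u v : ℝ → ℝ, IntervalIntegrable u MeasureTheory.volume 0 1 →
      IntervalIntegrable v MeasureTheory.volume 0 1 →
      (∀ᵐ k ∂(MeasureTheory.volume.restrict (Set.Ioc (0:ℝ) 1)), u k < v k) →
      ∫ k in (0:ℝ)..1, u k < ∫ k in (0:ℝ)..1, v k := by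
    intro u v hu hv h
    refine intervalIntegral.integral_lt_integral_of_ae_le_of_measure_setOfPred_lt_ne_zero
      zero_le_one hu hv (h.mono fun k hk => hk.le) ?_
    intro h0
    have h1 : ∀ᵐ k ∂(MeasureTheory.volume.restrict (Set.Ioc (0:ℝ) 1)), ¬ (u k < v k) := by
      rw [MeasureTheory.ae_iff]; simpa using h0
    have h2 : ∀ᵐ k ∂(MeasureTheory.volume.restrict (Set.Ioc (0:ℝ) 1)), False := by
      filter_upwards [h, h1] with k a b using b a
    rw [Filter.eventually_false_iff_eq_bot, MeasureTheory.ae_eq_bot] at h2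
    exact hne h2
  set A := ∫ k in (0:ℝ)..1, ‖f.eval (e k)‖ with hAdef
  have hA : 0 < A := by
    have := key (fun _ => 0) _ intervalIntegrable_const hint
      (hz.mono fun k hk => norm_pos_iff.2 hk)
    simpa using this
  have hAe : ∀ᵐ k ∂(MeasureTheory.volume.restrict (Set.Ioc (0:ℝ) 1)),
      ¬ (‖f.eval (e k)‖ = A) := by
    apply ae_of_finite
    refine Set.Finite.of_finite_image (f := e) ?_ (e_injOn.mono fun k hk => hk.1)
    by_contra hinf
    refine hmono (monomial_of_const f A hA (Set.Infinite.mono ?_ hinf))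
    rintro _ ⟨k, hk, rfl⟩
    exact ⟨e_norm k, hk.2⟩
  have hint2 : IntervalIntegrable (fun k => ‖f.eval (e k)‖ / A + (Real.log A - 1))
      MeasureTheory.volume 0 1 := (hint.div_const A).add intervalIntegrable_const
  have hlt := key _ _ (log_int f) hint2 (by
    filter_upwards [hz, hAe] with k h0 h1
    have hp : 0 < ‖f.eval (e k)‖ := norm_pos_iff.2 h0
    have := Real.log_lt_sub_one_of_pos (div_pos hp hA) (by rwa [Ne, div_eq_one_iff_eq hA.ne'])
    rw [Real.log_div hp.ne' hA.ne'] at this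
    linarith)
  rw [intervalIntegral.integral_add (hint.div_const A) intervalIntegrable_const,
    intervalIntegral.integral_div, ← hAdef, div_self hA.ne'] at hlt
  simp only [intervalIntegral.integral_const, sub_zero, one_smul] at hlt
  rw [← Real.lt_log_iff_exp_lt hA]
  linarith
end
end

section
/- Let P be a nonzero polynomial with complex coefficients and let L ≥ 2 be an integer. Then for Lebesgue-almost every k ∈ ℝ the Birkhoff-type averages along the orbit of the times-L map converge to the logarithmic Mahler measure: lim_{n→∞} (1/n)·Σ_{m=0}^{n−1} log|P(e^{2πi L^m k})| = ∫₀¹ log|P(e^{2πit})| dt. -/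
open Filter Polynomial

noncomputable section

open MeasureTheory

/-- The running maximum of Birkhoff sums of lengths `1, …, n+1`. -/
def runMax {α : Type*} (T : α → α) (f : α → ℝ) : ℕ → α → ℝ
  | 0 => f
  | n + 1 => fun x => f x + max 0 (runMax T f n (T x))

theorem runMax_succ {α : Type*} (T : α → α) (f : α → ℝ) (n : ℕ) (x : α) :
    runMax T f (n + 1) x = f x + max 0 (runMax T f n (T x)) := rfl

theorem runMax_le_succ {α : Type*} (T : α → α) (f : α → ℝ) (n : ℕ) :
    ∀ x, runMax T f n x ≤ runMax T f (n + 1) x := by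
  induction n with
  | zero => intro x; simp [runMax]
  | succ n ih =>
    intro x
    have := ih (T x)
    rw [runMax_succ, runMax_succ T f (n + 1)]
    gcongr

theorem runMax_mono {α : Type*} (T : α → α) (f : α → ℝ) (x : α) :
    Monotone (fun n => runMax T f n x) :=
  monotone_nat_of_le_succ (fun n => runMax_le_succ T f n x)

theorem birkhoffSum_le_runMax {α : Type*} (T : α → α) (f : α → ℝ) (n : ℕ) :
    ∀ x, birkhoffSum T f (n + 1) x ≤ runMax T f n x := by
  induction n with
  | zero => intro x; simp [runMax]
  | succ n ih =>
    intro x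
    rw [birkhoffSum_succ', runMax_succ]
    have := (ih (T x)).trans (le_max_right 0 _)
    linarith

theorem runMax_integrable {α : Type*} [MeasurableSpace α] {μ : Measure α}
    {T : α → α} (hT : MeasurePreserving T μ μ) {f : α → ℝ} (hf : Integrable f μ) (n : ℕ) :
    Integrable (runMax T f n) μ := by
  induction n with
  | zero => exact hf
  | succ n ih =>
    have h1 : Integrable (fun x => runMax T f n (T x)) μ := hT.integrable_comp_of_integrable ih
    exact hf.add ((integrable_zero _ _ _).sup h1)

theorem birkhoff_bdd {α : Type*} [MeasurableSpace α] {μ : Measure α}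
    {T : α → α} (hT : Ergodic T μ) {f : α → ℝ} (hfm : Measurable f) (hf : Integrable f μ)
    (hneg : ∫ x, f x ∂μ < 0) :
    ∀ᵐ x ∂μ, BddAbove (Set.range fun n => birkhoffSum T f n x) := by
  have hTm := hT.measurable
  have hmeas : MeasurableSet {x | BddAbove (Set.range fun n => birkhoffSum T f n x)} := by
    apply measurableSet_bddAbove_range
    intro n
    unfold birkhoffSum
    exact Finset.measurable_fun_sum _ (fun k _ => hfm.comp (hTm.iterate k))
  have hinv : T ⁻¹' {x | BddAbove (Set.range fun n => birkhoffSum T f n x)} =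
      {x | BddAbove (Set.range fun n => birkhoffSum T f n x)} := by
    ext x
    simp only [Set.mem_preimage, Set.mem_ofPred_eq]
    constructor
    · rintro ⟨C, hC⟩
      refine ⟨max 0 (f x + C), ?_⟩
      rintro _ ⟨n, rfl⟩
      cases n with
      | zero => simp
      | succ n =>
        have := hC ⟨n, rfl⟩
        simp only at this ⊢
        rw [birkhoffSum_succ']
        exact le_max_of_le_right (by linarith)
    · rintro ⟨C, hC⟩
      refine ⟨C - f x, ?_⟩
      rintro _ ⟨n, rfl⟩
      have := hC ⟨n + 1, rfl⟩
      simp only at this ⊢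
      rw [birkhoffSum_succ'] at this
      linarith
  rcases hT.toPreErgodic.ae_mem_or_ae_notMem hmeas hinv with h | h
  · exact h
  exfalso
  have hmp := hT.toMeasurePreserving
  have hTae : ∀ᵐ x ∂μ, ¬ BddAbove (Set.range fun n => birkhoffSum T f n (T x)) :=
    hmp.quasiMeasurePreserving.ae h
  have hint := fun n => runMax_integrable hmp hf n
  have hintT : ∀ n, Integrable (fun x => runMax T f n (T x)) μ :=
    fun n => hmp.integrable_comp_of_integrable (hint n)
  have hfT : Integrable (fun x => f (T x)) μ := hmp.integrable_comp_of_integrable hf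
  have key : Tendsto (fun n => ∫ x, (runMax T f (n + 1) x - runMax T f n (T x)) ∂μ) atTop
      (nhds (∫ x, f x ∂μ)) := by
    apply tendsto_integral_of_dominated_convergence (fun x => |f x| + |f (T x)|)
    · intro n
      exact ((hint (n + 1)).sub (hintT n)).aestronglyMeasurable
    · exact hf.abs.add hfT.abs
    · intro n
      refine Eventually.of_forall fun x => ?_
      have h0 : f (T x) ≤ runMax T f n (T x) := runMax_mono T f (T x) (Nat.zero_le n)
      rw [runMax_succ, Real.norm_eq_abs]
      rcases max_cases 0 (runMax T f n (T x)) with h | h <;> rw [h.1, abs_le] <;>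
        constructor <;> linarith [neg_abs_le (f x), le_abs_self (f x), neg_abs_le (f (T x)),
          le_abs_self (f (T x)), abs_nonneg (f (T x))]
    · filter_upwards [hTae] with x hx
      apply tendsto_const_nhds.congr'
      have : ∃ n, 0 < birkhoffSum T f n (T x) := by
        by_contra! hcon
        exact hx ⟨0, by rintro _ ⟨n, rfl⟩; exact hcon n⟩
      obtain ⟨n, hn⟩ := this
      obtain ⟨n, rfl⟩ : ∃ k, n = k + 1 :=
        Nat.exists_eq_succ_of_ne_zero (by rintro rfl; simp at hn)
      filter_upwards [eventually_ge_atTop n] with k hk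
      have h1 : runMax T f n (T x) ≤ runMax T f k (T x) := runMax_mono T f (T x) hk
      have h2 := birkhoffSum_le_runMax T f n (T x)
      rw [runMax_succ, max_eq_right (by linarith)]
      ring
  have : 0 ≤ ∫ x, f x ∂μ := by
    refine ge_of_tendsto' key fun n => ?_
    rw [integral_sub (hint _) (hintT _)]
    have h1 : ∫ x, runMax T f n (T x) ∂μ = ∫ x, runMax T f n x ∂μ := by
      have h2 := integral_map (μ := μ) (φ := T) hTm.aemeasurable (f := runMax T f n)
        (by rw [hmp.map_eq]; exact (hint n).aestronglyMeasurable)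
      rw [hmp.map_eq] at h2
      exact h2.symm
    rw [h1, sub_nonneg]
    exact integral_mono (hint _) (hint _) (runMax_le_succ T f n)
  linarith

theorem birkhoff_upper {α : Type*} [MeasurableSpace α] {μ : Measure α} [IsProbabilityMeasure μ]
    {T : α → α} (hT : Ergodic T μ) {f : α → ℝ} (hfm : Measurable f) (hf : Integrable f μ)
    {c : ℝ} (hc : ∫ x, f x ∂μ < c) :
    ∀ᵐ x ∂μ, ∀ᶠ n : ℕ in atTop, (1 / n : ℝ) * birkhoffSum T f n x < c := by
  obtain ⟨d, hd, hdc⟩ := exists_between hc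
  have hb := birkhoff_bdd hT (f := fun x => f x - d) (hfm.sub_const d)
    (hf.sub (integrable_const d)) (by
      rw [integral_sub hf (integrable_const d)]; simp; linarith)
  filter_upwards [hb] with x hx
  obtain ⟨C, hC⟩ := hx
  obtain ⟨N, hN⟩ := exists_nat_gt (C / (c - d))
  filter_upwards [eventually_ge_atTop N, eventually_gt_atTop 0] with n hn hn0
  have h1 := hC ⟨n, rfl⟩
  have h2 : birkhoffSum T (fun x => f x - d) n x = birkhoffSum T f n x - n * d := by
    simp [birkhoffSum, Finset.sum_sub_distrib]
  simp only [h2] at h1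
  have hn' : (0 : ℝ) < n := by exact_mod_cast hn0
  have h3 : C < n * (c - d) := by
    rw [div_lt_iff₀ (by linarith)] at hN
    have : (N : ℝ) ≤ n := by exact_mod_cast hn
    nlinarith
  rw [one_div, inv_mul_lt_iff₀ hn']
  linarith

theorem birkhoff_ergodic {α : Type*} [MeasurableSpace α] {μ : Measure α} [IsProbabilityMeasure μ]
    {T : α → α} (hT : Ergodic T μ) {f : α → ℝ} (hfm : Measurable f) (hf : Integrable f μ) :
    ∀ᵐ x ∂μ, Tendsto (fun n : ℕ => (1 / n : ℝ) * birkhoffSum T f n x) atTop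
      (nhds (∫ x, f x ∂μ)) := by
  have hu : ∀ᵐ x ∂μ, ∀ j : ℕ, ∀ᶠ n : ℕ in atTop,
      (1 / n : ℝ) * birkhoffSum T f n x < ∫ x, f x ∂μ + 1 / ((j : ℝ) + 1) :=
    ae_all_iff.2 fun j => birkhoff_upper hT hfm hf (by
      have : (0 : ℝ) < 1 / ((j : ℝ) + 1) := by positivity
      linarith)
  have hl : ∀ᵐ x ∂μ, ∀ j : ℕ, ∀ᶠ n : ℕ in atTop,
      (1 / n : ℝ) * birkhoffSum T (-f) n x < -∫ x, f x ∂μ + 1 / ((j : ℝ) + 1) :=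
    ae_all_iff.2 fun j => birkhoff_upper hT hfm.neg hf.neg (by
      have : (0 : ℝ) < 1 / ((j : ℝ) + 1) := by positivity
      simp only [Pi.neg_apply, integral_neg]
      linarith)
  filter_upwards [hu, hl] with x h1 h2
  rw [Metric.tendsto_nhds]
  intro ε hε
  obtain ⟨j, hj⟩ := exists_nat_one_div_lt hε
  filter_upwards [h1 j, h2 j] with n a b
  rw [birkhoffSum_neg] at b
  rw [Real.dist_eq, abs_lt]
  constructor <;> linarith

theorem ae_real_of_ae_circle {p : UnitAddCircle → Prop} (h : ∀ᵐ x, p x) :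
    ∀ᵐ k : ℝ, p (k : UnitAddCircle) := by
  have h1 : ∀ n : ℤ, ∀ᵐ k : ℝ ∂(volume.restrict (Set.Ioc (n : ℝ) (n + 1))),
      p (k : UnitAddCircle) := fun n =>
    (UnitAddCircle.measurePreserving_mk (n : ℝ)).quasiMeasurePreserving.ae h
  have h2 := (ae_restrict_iUnion_iff (μ := (volume : Measure ℝ))
    (fun n : ℤ => Set.Ioc (n : ℝ) (n + 1)) (fun k : ℝ => p (k : UnitAddCircle))).2 h1
  rwa [iUnion_Ioc_intCast, Measure.restrict_univ] at h2

theorem e_eq_toCircle (k : ℝ) : e k = (AddCircle.toCircle (k : UnitAddCircle) : ℂ) := by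
  rw [AddCircle.toCircle_apply_mk, Circle.coe_exp, e]
  congr 1
  push_cast
  ring

/-- For a nonzero complex polynomial `P` and an integer `L ≥ 2`, for
Lebesgue-a.e. `k ∈ ℝ` the Birkhoff-type averages along the orbit of the times-`L` map converge
to the logarithmic Mahler measure of `P`. -/
theorem Birkhoff_average_log_abs_poly_tendsto_mahler
    (P : Polynomial ℂ) (hP : P ≠ 0) (L : ℕ) (hL : 2 ≤ L) :
    ∀ᵐ k : ℝ,
      Tendsto (fun n : ℕ => (1 / n : ℝ) *
          ∑ m ∈ Finset.range n, Real.log ‖P.eval (e ((L : ℝ) ^ m * k))‖)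
        atTop (nhds (∫ t in (0:ℝ)..1, Real.log ‖P.eval (e t)‖)) := by
  let f : UnitAddCircle → ℝ := fun x => Real.log ‖P.eval (AddCircle.toCircle x : ℂ)‖
  have hfm : Measurable f := by
    apply Real.measurable_log.comp
    apply Continuous.measurable
    exact (P.continuous.comp (continuous_subtype_val.comp AddCircle.continuous_toCircle)).norm
  have hfk : ∀ k : ℝ, f (k : UnitAddCircle) = Real.log ‖P.eval (e k)‖ := fun k => by
    simp only [f, e_eq_toCircle]
  have hI : IntervalIntegrable (fun k : ℝ => f (k : UnitAddCircle)) volume 0 1 := by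
    have h := P.intervalIntegrable_mahlerMeasure.comp_mul_left (c := 2 * Real.pi)
    rw [zero_div, div_self (by positivity)] at h
    refine h.congr (fun k _ => ?_)
    simp only [hfk, circleMap, e]
    congr 4
    push_cast
    simp
    ring_nf
  have hf : Integrable f := by
    have hmp := UnitAddCircle.measurePreserving_mk 0
    rw [← hmp.integrable_comp hfm.aestronglyMeasurable]
    rw [intervalIntegrable_iff_integrableOn_Ioc_of_le zero_le_one] at hI
    rw [zero_add]
    exact hI
  have herg : Ergodic (fun y : UnitAddCircle => L • y) := AddCircle.ergodic_nsmul (by omega)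
  have hint : ∫ t in (0:ℝ)..1, Real.log ‖P.eval (e t)‖ = ∫ x, f x := by
    rw [← UnitAddCircle.intervalIntegral_preimage 0 f, zero_add]
    simp only [hfk]
  rw [hint]
  haveI : IsProbabilityMeasure (volume : Measure UnitAddCircle) :=
    ⟨UnitAddCircle.measure_univ⟩
  have hmain := ae_real_of_ae_circle (birkhoff_ergodic herg hfm hf)
  filter_upwards [hmain] with k hk
  refine hk.congr fun n => ?_
  congr 1
  refine Finset.sum_congr rfl fun m _ => ?_
  rw [← hfk]
  congr 1
  rw [smul_iterate]
  simp only
  rw [← AddCircle.coe_nsmul, nsmul_eq_mul]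
  push_cast
  rfl
end
end
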